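/- The CM value of the hauptmodul of the Fricke group Γ₀*(6) at the point (2 + √-2)/6 equals -10: j₆*((2 + i√2)/6) = -10. Consequently, since the CM point (2+i√2)/6 is the root α_Q of the quadratic form Q = [6,-4,1] of discriminant -8, whose class 𝒬_{8,6}/Γ₀*(6) is a single orbit with |Γ̄₀*(6)_Q| = 2, and φ₂(j₆*) = (j₆*)² - 158, one has t₂^{(6*)}(8) = ((-10)² - 158)/2 = -29. -/

import Mathlib

open Complex Matrix

noncomputable section

/-- `SL(2, ℝ)`. -/
abbrev SL2R := Matrix.SpecialLinearGroup (Fin 2) ℝ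

/-- `q = e^{2πiz}` (also used as `ζ = e^{2πiz}`). -/
def qc (z : ℂ) : ℂ := Complex.exp (2 * Real.pi * Complex.I * z)

/-- The Dedekind eta function `η(z) = q^{1/24} ∏_{n ≥ 1} (1 - q^n)` (intended for `Im z > 0`). -/
def dedekindEta (z : ℂ) : ℂ :=
  Complex.exp (Real.pi * Complex.I * z / 12) *
    ∏' n : ℕ, (1 - Complex.exp (2 * Real.pi * Complex.I * ((n : ℂ) + 1) * z))

/-- The hauptmodul `j_N` of `Γ₀(N)` for `N ∈ {2, 3, 5, 7, 13, 6, 10}`. -/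
def jn (N : ℕ) (z : ℂ) : ℂ :=
  if N = 6 then (dedekindEta (2 * z) * dedekindEta (3 * z) ^ 3 / (dedekindEta z * dedekindEta (6 * z) ^ 3)) ^ 3 - 3
  else if N = 10 then dedekindEta (2 * z) * dedekindEta (5 * z) ^ 5 / (dedekindEta z * dedekindEta (10 * z) ^ 5) - 1
  else (dedekindEta z / dedekindEta ((N : ℂ) * z)) ^ (24 / (N - 1)) + 24 / ((N : ℂ) - 1)

/-- The hauptmodul `j_N^*` of the Fricke group `Γ₀^*(N)` for `N ∈ {2, 3, 5, 7, 13, 6, 10}`. -/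
def jnStar (N : ℕ) (z : ℂ) : ℂ :=
  if N = 6 then
    (dedekindEta z * dedekindEta (3 * z) / (dedekindEta (2 * z) * dedekindEta (6 * z))) ^ 6 + 6 +
      2 ^ 6 * (dedekindEta (2 * z) * dedekindEta (6 * z) / (dedekindEta z * dedekindEta (3 * z))) ^ 6
  else if N = 10 then
    (dedekindEta z * dedekindEta (5 * z) / (dedekindEta (2 * z) * dedekindEta (10 * z))) ^ 4 + 4 +
      2 ^ 4 * (dedekindEta (2 * z) * dedekindEta (10 * z) / (dedekindEta z * dedekindEta (5 * z))) ^ 4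
  else
    (dedekindEta z / dedekindEta ((N : ℂ) * z)) ^ (24 / (N - 1)) + 24 / ((N : ℂ) - 1) +
      (N : ℂ) ^ (12 / (N - 1)) * (dedekindEta ((N : ℂ) * z) / dedekindEta z) ^ (24 / (N - 1))

/-- `f` has the `q`-expansion `f(τ) = Σ_{n ≥ n₀} (a n) q^n` on the upper half-plane. -/
def HasQExp (f : ℂ → ℂ) (a : ℤ → ℂ) (n₀ : ℤ) : Prop :=
  (∀ n < n₀, a n = 0) ∧
    ∀ τ : ℂ, 0 < τ.im →
      HasSum (fun m : ℕ => a (n₀ + m) * qc τ ^ (n₀ + (m : ℤ))) (f τ)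

/-- `Γ₀(N)` viewed as a subgroup of `SL(2, ℝ)`. -/
def Gamma0SL2R (N : ℕ) : Subgroup SL2R :=
  (CongruenceSubgroup.Gamma0 N).map
    (Matrix.SpecialLinearGroup.map (Int.castRingHom ℝ))

/-- The set of Atkin–Lehner matrices `W_e` of level `N`:
`W_e = e^{-1/2} [[xe, y], [zN, we]]`, `x, y, z, w ∈ ℤ` (determinant `1` being automatic). -/
def atkinLehnerSet (N e : ℕ) : Set SL2R :=
  { g | ∃ x y z w : ℤ,
      g.1 = (Real.sqrt e)⁻¹ • !![(x : ℝ) * e, (y : ℝ); (z : ℝ) * N, (w : ℝ) * e] }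

/-- The Fricke group `Γ₀^*(N)`, generated by `Γ₀(N)` and all Atkin–Lehner involutions `W_e`
for `e ∣ N` with `gcd(e, N/e) = 1`. -/
def FrickeGroup (N : ℕ) : Subgroup SL2R :=
  Subgroup.closure
    ((Gamma0SL2R N : Set SL2R) ∪
      ⋃ e ∈ {e : ℕ | e ∣ N ∧ Nat.Coprime e (N / e)}, atkinLehnerSet N e)

/-- The Gram matrix of the integral binary quadratic form `[a, b, c]`. -/
def formMat (a b c : ℤ) : Matrix (Fin 2) (Fin 2) ℝ :=
  !![(a : ℝ), (b : ℝ) / 2; (b : ℝ) / 2, (c : ℝ)]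

/-- `𝒬_{d,N}`: positive definite integral binary quadratic forms `[a, b, c]` of
discriminant `-d` with `N ∣ a`. -/
def QdN (d : ℤ) (N : ℕ) : Set (Matrix (Fin 2) (Fin 2) ℝ) :=
  { M | ∃ a b c : ℤ, M = formMat a b c ∧ 0 < a ∧ b ^ 2 - 4 * a * c = -d ∧ (N : ℤ) ∣ a }

/-- `𝒬_{d,N,h}`: members of `𝒬_{d,N}` with `b ≡ h (mod 2N)`. -/
def QdNh (d : ℤ) (N : ℕ) (h : ℤ) : Set (Matrix (Fin 2) (Fin 2) ℝ) :=
  { M | ∃ a b c : ℤ, M = formMat a b c ∧ 0 < a ∧ b ^ 2 - 4 * a * c = -d ∧ (N : ℤ) ∣ a ∧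
      (b : ZMod (2 * N)) = (h : ZMod (2 * N)) }

/-- Orbit relation of the (right) action `Q ↦ Q ∘ g`, i.e. `M ↦ gᵀ M g`, of `Γ ≤ SL(2, ℝ)`
on a set `S` of Gram matrices of quadratic forms. -/
def formRel (Γ : Subgroup SL2R) (S : Set (Matrix (Fin 2) (Fin 2) ℝ)) (Q Q' : S) : Prop :=
  ∃ g ∈ Γ, Q'.1 = (g.1)ᵀ * Q.1 * g.1

/-- The CM point `α_Q` of a positive definite form (as a point of `ℂ`; it lies in the upper
half-plane): `α_Q = (-b + i √d) / (2a) = (-(b/2) + i √(det M)) / a`. -/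
def cmPointC (M : Matrix (Fin 2) (Fin 2) ℝ) : ℂ :=
  ((-(M 0 1) : ℝ) + Complex.I * Real.sqrt M.det) / ((M 0 0 : ℝ) : ℂ)

/-- The order of the stabilizer of the form `M` in `Γ/{±1}` (the stabilizer in `Γ` contains
`±1` and has twice the cardinality). -/
def stabOrder (Γ : Subgroup SL2R) (M : Matrix (Fin 2) (Fin 2) ℝ) : ℕ :=
  Nat.card { g : SL2R // g ∈ Γ ∧ (g.1)ᵀ * M * g.1 = M } / 2

/-- The modular trace `Σ_{Q ∈ S/Γ} f(α_Q) / |Γ̄_Q|`. -/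
def classTrace (Γ : Subgroup SL2R) (f : ℂ → ℂ)
    (S : Set (Matrix (Fin 2) (Fin 2) ℝ)) : ℂ :=
  ∑ᶠ O : Quot (formRel Γ S),
    f (cmPointC (Quot.out O).1) / (stabOrder Γ (Quot.out O).1 : ℂ)

/-- `t₂^{(N*)}(d)`, where `P` is the polynomial with `φ₂(j_N^*) = P(j_N^*)`;
includes the paper's conventions at nonpositive indices. -/
def t2Star (N : ℕ) (P : Polynomial ℂ) (d : ℤ) : ℂ :=
  if 0 < d then
    classTrace (FrickeGroup N) (fun z => Polynomial.eval (jnStar N z) P) (QdN d N)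
  else if d = 0 then (if N = 2 then 5 else if N = 6 ∨ N = 10 then 5 / 2 else 3)
  else if d = -1 then -1
  else if d = -4 then -2
  else 0

/-- `σ₁^{(N)}(x) = Σ_{d ∣ x, N ∤ d} d` for `x ∈ ℤ_{>0}`, `(N-1)/24` at `x = 0`, and `0`
off `ℤ_{≥0}`. -/
def sigmaN (N : ℕ) (x : ℚ) : ℂ :=
  if x = 0 then ((N : ℂ) - 1) / 24
  else if 0 < x ∧ x.den = 1 then
    ∑ d ∈ (Nat.divisors x.num.toNat).filter (fun d => ¬ N ∣ d), (d : ℂ)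
  else 0

/-- `σ₁(x) = Σ_{d ∣ x} d` for `x ∈ ℤ_{>0}` and `0` otherwise. -/
def sigmaQ (x : ℚ) : ℂ :=
  if 0 < x ∧ x.den = 1 then ∑ d ∈ Nat.divisors x.num.toNat, (d : ℂ) else 0

/-- A weakly holomorphic Jacobi form of weight `k` and index `m`. -/
structure WeakJacobiForm (k : ℤ) (m : ℕ) where
  toFun : ℂ → ℂ → ℂ
  holo : DifferentiableOn ℂ (fun p : ℂ × ℂ => toFun p.1 p.2)
      ({τ : ℂ | 0 < τ.im} ×ˢ (Set.univ : Set ℂ))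
  slash_inv : ∀ a b c d : ℤ, a * d - b * c = 1 → ∀ τ z : ℂ, 0 < τ.im →
    ((c : ℂ) * τ + d) ^ (-k) *
        Complex.exp (-(2 * Real.pi * Complex.I * m * c * z ^ 2) / ((c : ℂ) * τ + d)) *
        toFun (((a : ℂ) * τ + b) / ((c : ℂ) * τ + d)) (z / ((c : ℂ) * τ + d)) =
      toFun τ z
  elliptic : ∀ lm mu : ℤ, ∀ τ z : ℂ, 0 < τ.im →
    Complex.exp (2 * Real.pi * Complex.I * m * ((lm : ℂ) ^ 2 * τ + 2 * lm * z)) *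
        toFun τ (z + lm * τ + mu) = toFun τ z
  coeff : ℤ → ℤ → ℂ
  coeff_neg_finite : {n : ℤ | n < 0 ∧ ∃ r : ℤ, coeff n r ≠ 0}.Finite
  expansion : ∀ τ z : ℂ, 0 < τ.im →
    HasSum (fun p : ℤ × ℤ => coeff p.1 p.2 * qc τ ^ p.1 * qc z ^ p.2) (toFun τ z)

/-- Meromorphy of weight `k` at all cusps: at each cusp `γ∞`, the function `F|_k γ` has a
Fourier expansion in fractional powers of `q` with only finitely many negative terms. -/
def MeromAtCusps (k : ℤ) (F : ℂ → ℂ) : Prop :=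
  ∀ a b c d : ℤ, a * d - b * c = 1 →
    ∃ (M : ℕ) (cs : ℤ → ℂ) (n₀ : ℤ), 0 < M ∧
      ∀ τ : ℂ, 0 < τ.im →
        HasSum
          (fun j : ℕ => cs (n₀ + j) *
            Complex.exp (2 * Real.pi * Complex.I * τ / M) ^ (n₀ + (j : ℤ)))
          (((c : ℂ) * τ + d) ^ (-k) * F (((a : ℂ) * τ + b) / ((c : ℂ) * τ + d)))

/-- The Möbius action of an element of `SL(2, ℝ)` on `ℂ`. -/
def moebius (g : SL2R) (z : ℂ) : ℂ :=
  ((g.1 0 0 : ℝ) * z + ((g.1 0 1 : ℝ) : ℂ)) / ((g.1 1 0 : ℝ) * z + ((g.1 1 1 : ℝ) : ℂ))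

/-- A weakly holomorphic modular function on `Γ`: holomorphic on the upper half-plane,
`Γ`-invariant, with poles only at the cusps. -/
def IsWeaklyHolModularFn (Γ : Subgroup SL2R) (f : ℂ → ℂ) : Prop :=
  DifferentiableOn ℂ f {z : ℂ | 0 < z.im} ∧
    (∀ g ∈ Γ, ∀ z : ℂ, 0 < z.im → f (moebius g z) = f z) ∧
    MeromAtCusps 0 f

/-- The set `L_{h, d/4N}` of vectors
`X = [[b + h/2N, c/N], [-a, -(b + h/2N)]]`, `a, b, c ∈ ℤ`, of norm `q(X) = d/4N`. -/
def LhSet (N : ℕ) (h d : ℤ) : Set (Matrix (Fin 2) (Fin 2) ℝ) :=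
  { X | ∃ a b c : ℤ,
      X = !![(b : ℝ) + (h : ℝ) / (2 * N), (c : ℝ) / N;
             -(a : ℝ), -((b : ℝ) + (h : ℝ) / (2 * N))] ∧
      (2 * b * N + h) ^ 2 - 4 * a * c * N = -d }

/-- The map `X ↦ N ⬝ [[0,-1],[1,0]] ⬝ X` from vectors to Gram matrices of quadratic forms. -/
def vecToForm (N : ℕ) (X : Matrix (Fin 2) (Fin 2) ℝ) : Matrix (Fin 2) (Fin 2) ℝ :=
  (N : ℝ) • (!![(0 : ℝ), -1; 1, 0] * X)

/-- Orbit relation of `Γ` acting by conjugation `g.X = g X g⁻¹` on a set `S` of vectors. -/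
def vecRel (Γ : Subgroup SL2R) (S : Set (Matrix (Fin 2) (Fin 2) ℝ)) (X X' : S) : Prop :=
  ∃ g ∈ Γ, X'.1 = g.1 * X.1 * (g⁻¹).1

/-- The Heegner point `D_X ∈ ℍ` of a vector `X` of positive norm. -/
def heegnerC (X : Matrix (Fin 2) (Fin 2) ℝ) : ℂ :=
  ((X 0 0 / X 1 0 : ℝ) : ℂ) + Complex.I * Real.sqrt (X.det / (X 1 0) ^ 2)

/-- The order of the stabilizer of the vector `X` in `Γ/{±1}`. -/
def vecStabOrder (Γ : Subgroup SL2R) (X : Matrix (Fin 2) (Fin 2) ℝ) : ℕ :=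
  Nat.card { g : SL2R // g ∈ Γ ∧ g.1 * X * (g⁻¹).1 = X } / 2

/-- The modular trace `t_f(h, m) = Σ_{X ∈ Γ\L_{h,m}} f(D_X) / |Γ̄_X|`. -/
def vecTrace (Γ : Subgroup SL2R) (f : ℂ → ℂ) (S : Set (Matrix (Fin 2) (Fin 2) ℝ)) : ℂ :=
  ∑ᶠ O : Quot (vecRel Γ S), f (heegnerC (Quot.out O).1) / (vecStabOrder Γ (Quot.out O).1 : ℂ)

/-- The weight-2 Eisenstein series `E₂(z) = 1 - 24 Σ_{n ≥ 1} σ₁(n) qⁿ`. -/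
def E2 (z : ℂ) : ℂ :=
  1 - 24 * ∑' n : ℕ, (∑ d ∈ Nat.divisors (n + 1), (d : ℂ)) * qc z ^ (n + 1)

/-- `E₂^{(N)}(z) = N E₂(Nz) - E₂(z)`. -/
def E2N (N : ℕ) (z : ℂ) : ℂ := (N : ℂ) * E2 ((N : ℂ) * z) - E2 z

end

/-!
In terms of the eta quotient `t = (η(z)η(3z) / (η(2z)η(6z)))⁶` the hauptmodul is
`j₆* = t + 6 + 64 / t`. At the root `z` of `6z² - 4z + 1` one has `6z = -1/z + 4` and
`3z = -1/(2z) + 2`, so the transformation laws of `η` express `η(6z)` and `η(3z)` through `η(z)` and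
`η(2z)`, and everything cancels to `t = -8`.

One descent shows both that `Γ₀*(6)` is generated by the translations, `W₃` and `W₆`, and that the
forms of discriminant `-8` form a single class: a translation followed by `W₃` or `W₆` lowers the
leading coefficient of every form with large leading coefficient compared to its determinant, in
particular that of the degenerate form `(cX + dY)²` attached to a matrix with lower row `(c, d)`.
The invariance of `j₆*` then needs checking on generators only. The stabilizer of `[6, -4, 1]` is
cyclic of order four, generated by an involution `W₂` with `W₂² = -1`.
-/

section Eta

theorem dedekindEta_eq_eta (z : ℂ) : dedekindEta z = ModularForm.eta z := by
  simp only [dedekindEta, ModularForm.eta, ModularForm.eta_q_eq_cexp]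
  congr 2
  push_cast
  ring

theorem dedekindEta_ne_zero {z : ℂ} (hz : 0 < z.im) : dedekindEta z ≠ 0 :=
  dedekindEta_eq_eta z ▸ ModularForm.eta_ne_zero hz

theorem ne_zero_of_im_pos {z : ℂ} (hz : 0 < z.im) : z ≠ 0 := by
  rintro rfl
  exact lt_irrefl _ hz

theorem two_mul_add_one_ne_zero {z : ℂ} (hz : 0 < z.im) : 2 * z + 1 ≠ 0 :=
  ne_zero_of_im_pos (by simpa using hz)

theorem dedekindEta_pow_six_add_one (z : ℂ) :
    dedekindEta (z + 1) ^ 6 = I * dedekindEta z ^ 6 := by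
  have hq (n : ℕ) : Complex.exp (2 * Real.pi * I * ((n : ℂ) + 1) * (z + 1)) =
      Complex.exp (2 * Real.pi * I * ((n : ℂ) + 1) * z) := by
    rw [Complex.exp_eq_exp_iff_exists_int]
    exact ⟨n + 1, by push_cast; ring⟩
  have hI : Complex.exp (Real.pi * I / 12) ^ 6 = I := by
    rw [← Complex.exp_nat_mul]
    refine Eq.trans ?_ Complex.exp_pi_div_two_mul_I
    congr 1
    push_cast
    ring
  have hadd : Complex.exp (Real.pi * I * (z + 1) / 12) =
      Complex.exp (Real.pi * I / 12) * Complex.exp (Real.pi * I * z / 12) := by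
    rw [← Complex.exp_add]
    congr 1
    ring
  simp only [dedekindEta, hq, hadd, mul_pow, hI]
  ring

theorem dedekindEta_pow_six_add_natCast (z : ℂ) (n : ℕ) :
    dedekindEta (z + n) ^ 6 = I ^ n * dedekindEta z ^ 6 := by
  induction n with
  | zero => simp
  | succ n ih =>
    rw [Nat.cast_succ, ← add_assoc, dedekindEta_pow_six_add_one, ih]
    ring

theorem sqrt_pow_six {w : ℂ} (hw : w ≠ 0) : Complex.sqrt w ^ 6 = w ^ 3 := by
  rw [sqrt_eq_exp hw, ← Complex.exp_nat_mul]
  conv_rhs => rw [← Complex.exp_log hw, ← Complex.exp_nat_mul]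
  congr 1
  push_cast
  ring

theorem dedekindEta_pow_six_neg_one_div {z : ℂ} (hz : 0 < z.im) :
    dedekindEta (-1 / z) ^ 6 = I * z ^ 3 * dedekindEta z ^ 6 := by
  have h : ModularForm.eta (-1 / z) =
      (Complex.sqrt I)⁻¹ * (Complex.sqrt z * ModularForm.eta z) := by
    simpa using ModularForm.eta_comp_eq_csqrt_I_inv hz
  rw [dedekindEta_eq_eta, dedekindEta_eq_eta, h]
  simp only [mul_pow, inv_pow, sqrt_pow_six (ne_zero_of_im_pos hz), sqrt_pow_six I_ne_zero,
    I_pow_three, inv_neg, inv_I]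
  ring

theorem dedekindEta_pow_six_neg_one_div_add {z : ℂ} (hz : 0 < z.im) (m n : ℕ) :
    dedekindEta (-1 / (z + m) + n) ^ 6 = I ^ (m + n + 1) * (z + m) ^ 3 * dedekindEta z ^ 6 := by
  rw [dedekindEta_pow_six_add_natCast, dedekindEta_pow_six_neg_one_div (by simpa using hz),
    dedekindEta_pow_six_add_natCast]
  ring

theorem dedekindEta_pow_six_div_two_mul_add_one {z : ℂ} (hz : 0 < z.im) :
    dedekindEta (z / (2 * z + 1)) ^ 6 = -(2 * z + 1) ^ 3 * dedekindEta z ^ 6 := by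
  have hz0 := ne_zero_of_im_pos hz
  have hd := two_mul_add_one_ne_zero hz
  -- `z / (2z + 1) = S T⁻² S z`
  set v := -1 / z - 2 with hv
  have hvz : v * z = -(2 * z + 1) := by
    rw [hv]
    field_simp
    ring
  have hv_im : 0 < v.im := by
    simpa [hv, neg_div] using div_pos hz (normSq_pos.mpr hz0)
  have hvS : z / (2 * z + 1) = -1 / v := by
    rw [div_eq_div_iff hd (ne_zero_of_im_pos hv_im)]
    linear_combination hvz
  have hvT : dedekindEta (v + (2 : ℕ)) ^ 6 = I * z ^ 3 * dedekindEta z ^ 6 := by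
    rw [← dedekindEta_pow_six_neg_one_div hz, hv]
    norm_num
  rw [dedekindEta_pow_six_add_natCast, I_sq] at hvT
  rw [hvS, dedekindEta_pow_six_neg_one_div hv_im]
  calc I * v ^ 3 * dedekindEta v ^ 6
      = -(I * v ^ 3) * (-1 * dedekindEta v ^ 6) := by ring
    _ = -I ^ 2 * (v * z) ^ 3 * dedekindEta z ^ 6 := by
      rw [hvT]
      ring
    _ = -(2 * z + 1) ^ 3 * dedekindEta z ^ 6 := by
      rw [hvz, I_sq]
      ring

end Eta

section EtaQuotient

/-- The eta quotient `(η(z)η(3z) / (η(2z)η(6z)))⁶` of level `6`, in terms of which the hauptmodul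
`j₆*` is `t + 6 + 64 / t`. -/
noncomputable def etaQuot (z : ℂ) : ℂ :=
  (dedekindEta z * dedekindEta (3 * z) / (dedekindEta (2 * z) * dedekindEta (6 * z))) ^ 6

theorem etaQuot_eq (z : ℂ) : etaQuot z = dedekindEta z ^ 6 * dedekindEta (3 * z) ^ 6 /
    (dedekindEta (2 * z) ^ 6 * dedekindEta (6 * z) ^ 6) := by
  rw [etaQuot, div_pow, mul_pow, mul_pow]

theorem jnStar_six (z : ℂ) : jnStar 6 z = etaQuot z + 6 + 64 / etaQuot z := by
  simp only [jnStar, etaQuot, if_true]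
  rw [← inv_div (dedekindEta z * dedekindEta (3 * z)), inv_pow, div_eq_mul_inv (64 : ℂ)]
  norm_num

theorem etaQuot_add_one (z : ℂ) : etaQuot (z + 1) = etaQuot z := by
  have h (m : ℕ) : dedekindEta (m * (z + 1)) ^ 6 = I ^ m * dedekindEta (m * z) ^ 6 := by
    rw [mul_add, mul_one, dedekindEta_pow_six_add_natCast]
  have h2 : dedekindEta (2 * (z + 1)) ^ 6 = I ^ 2 * dedekindEta (2 * z) ^ 6 := mod_cast h 2
  have h3 : dedekindEta (3 * (z + 1)) ^ 6 = I ^ 3 * dedekindEta (3 * z) ^ 6 := mod_cast h 3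
  have h6 : dedekindEta (6 * (z + 1)) ^ 6 = I ^ 6 * dedekindEta (6 * z) ^ 6 := mod_cast h 6
  rw [etaQuot_eq, etaQuot_eq, dedekindEta_pow_six_add_one, h2, h3, h6]
  rw [show I ^ 6 = I ^ 2 from I_pow_eq_pow_mod 6, I_sq, neg_one_mul, neg_one_mul, neg_mul_neg]
  congr 1
  linear_combination dedekindEta z ^ 6 * dedekindEta (3 * z) ^ 6 * I_pow_four

theorem etaQuot_add_intCast (z : ℂ) (k : ℤ) : etaQuot (z + k) = etaQuot z := by
  have hper : Function.Periodic etaQuot 1 := etaQuot_add_one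
  simpa using hper.int_mul k z

theorem etaQuot_neg_one_div {z : ℂ} (hz : 0 < z.im) :
    etaQuot (-1 / (6 * z)) = 64 / etaQuot z := by
  have hz0 := ne_zero_of_im_pos hz
  rw [etaQuot_eq, etaQuot_eq,
    show 3 * (-1 / (6 * z)) = -1 / (2 * z) by field_simp; norm_num,
    show 2 * (-1 / (6 * z)) = -1 / (3 * z) by field_simp; norm_num,
    show 6 * (-1 / (6 * z)) = -1 / z by field_simp,
    dedekindEta_pow_six_neg_one_div hz, dedekindEta_pow_six_neg_one_div (z := 2 * z) (by simpa),
    dedekindEta_pow_six_neg_one_div (z := 3 * z) (by simpa),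
    dedekindEta_pow_six_neg_one_div (z := 6 * z) (by simpa)]
  have := I_ne_zero
  field_simp
  ring

theorem etaQuot_three_mul_add_one_div {z : ℂ} (hz : 0 < z.im) :
    etaQuot ((3 * z + 1) / (6 * z + 3)) = etaQuot z := by
  have hd := two_mul_add_one_ne_zero hz
  have hd6 : 6 * z + 3 ≠ 0 := ne_zero_of_im_pos (by simpa using hz)
  have hI : I ^ 5 = I := by rw [I_pow_eq_pow_mod, pow_one]
  have e1 : dedekindEta ((3 * z + 1) / (6 * z + 3)) ^ 6 =
      -I * (6 * z + 3) ^ 3 * dedekindEta (3 * z) ^ 6 := by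
    rw [show 6 * z + 3 = 2 * (3 * z + 1) + 1 by ring,
      dedekindEta_pow_six_div_two_mul_add_one (by simpa using hz), dedekindEta_pow_six_add_one]
    ring
  have e3 : dedekindEta (3 * ((3 * z + 1) / (6 * z + 3))) ^ 6 =
      -I * (2 * z + 1) ^ 3 * dedekindEta z ^ 6 := by
    rw [show 3 * ((3 * z + 1) / (6 * z + 3)) = z / (2 * z + 1) + 1 by grind,
      dedekindEta_pow_six_add_one, dedekindEta_pow_six_div_two_mul_add_one hz]
    ring
  have e2 : dedekindEta (2 * ((3 * z + 1) / (6 * z + 3))) ^ 6 =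
      I * (6 * z + 3) ^ 3 * dedekindEta (6 * z) ^ 6 := by
    rw [show 2 * ((3 * z + 1) / (6 * z + 3)) = -1 / (6 * z + (3 : ℕ)) + (1 : ℕ) by
        push_cast; grind,
      dedekindEta_pow_six_neg_one_div_add (by simpa using hz), hI]
    norm_num
  have e6 : dedekindEta (6 * ((3 * z + 1) / (6 * z + 3))) ^ 6 =
      I * (2 * z + 1) ^ 3 * dedekindEta (2 * z) ^ 6 := by
    rw [show 6 * ((3 * z + 1) / (6 * z + 3)) = -1 / (2 * z + (1 : ℕ)) + (3 : ℕ) by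
        push_cast; grind,
      dedekindEta_pow_six_neg_one_div_add (by simpa using hz), hI]
    norm_num
  rw [etaQuot_eq, etaQuot_eq, e1, e2, e3, e6]
  generalize 6 * z + 3 = u at hd6
  generalize 2 * z + 1 = v at hd
  field_simp [I_ne_zero]

theorem jnStar_six_add_intCast (z : ℂ) (k : ℤ) : jnStar 6 (z + k) = jnStar 6 z := by
  rw [jnStar_six, jnStar_six, etaQuot_add_intCast]

theorem jnStar_six_neg_one_div {z : ℂ} (hz : 0 < z.im) :
    jnStar 6 (-1 / (6 * z)) = jnStar 6 z := by
  rw [jnStar_six, jnStar_six, etaQuot_neg_one_div hz, div_div_cancel₀ (by norm_num)]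
  ring

theorem jnStar_six_three_mul_add_one_div {z : ℂ} (hz : 0 < z.im) :
    jnStar 6 ((3 * z + 1) / (6 * z + 3)) = jnStar 6 z := by
  rw [jnStar_six, jnStar_six, etaQuot_three_mul_add_one_div hz]

theorem etaQuot_of_quadratic {z : ℂ} (hz : 0 < z.im) (h : 6 * z ^ 2 - 4 * z + 1 = 0) :
    etaQuot z = -8 := by
  have hz0 := ne_zero_of_im_pos hz
  have h2 : dedekindEta (2 * z) ^ 6 ≠ 0 := pow_ne_zero _ (dedekindEta_ne_zero (by simpa))
  have h6 : dedekindEta (6 * z) ^ 6 ≠ 0 := pow_ne_zero _ (dedekindEta_ne_zero (by simpa))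
  have hS1 : dedekindEta (6 * z) ^ 6 = I * z ^ 3 * dedekindEta z ^ 6 := by
    have hz_inv : 6 * z = -1 / z + (4 : ℕ) := by
      field_simp
      linear_combination h
    rw [hz_inv, dedekindEta_pow_six_add_natCast, dedekindEta_pow_six_neg_one_div hz, I_pow_four,
      one_mul]
  have hS2 : dedekindEta (3 * z) ^ 6 = -(I * (2 * z) ^ 3 * dedekindEta (2 * z) ^ 6) := by
    have hz_inv : 3 * z = -1 / (2 * z) + (2 : ℕ) := by
      field_simp
      linear_combination h
    rw [hz_inv, dedekindEta_pow_six_add_natCast,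
      dedekindEta_pow_six_neg_one_div (by simpa using hz), I_sq, neg_one_mul]
  rw [etaQuot_eq, div_eq_iff (mul_ne_zero h2 h6), hS2, hS1]
  ring

theorem jnStar_six_of_quadratic {z : ℂ} (hz : 0 < z.im) (h : 6 * z ^ 2 - 4 * z + 1 = 0) :
    jnStar 6 z = -10 := by
  rw [jnStar_six, etaQuot_of_quadratic hz h]
  norm_num

end EtaQuotient

section FormAction

theorem coe_mul_SL2R (g h : SL2R) : (g * h).1 = g.1 * h.1 :=
  Matrix.SpecialLinearGroup.coe_mul g h

theorem det_eq_one_SL2R (g : SL2R) : g.1 0 0 * g.1 1 1 - g.1 0 1 * g.1 1 0 = 1 := by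
  rw [← det_fin_two]
  exact g.2

theorem coe_inv_SL2R (g : SL2R) :
    (g⁻¹).1 = !![g.1 1 1, -g.1 0 1; -g.1 1 0, g.1 0 0] := by
  rw [← adjugate_fin_two]
  exact Matrix.SpecialLinearGroup.coe_inv g

/-- The Gram matrix `gᵀ M g` of the form `Q ∘ g`, where `M` is the Gram matrix of `Q`: the right
action of `SL(2, ℝ)` on binary quadratic forms. -/
def formComp (M : Matrix (Fin 2) (Fin 2) ℝ) (g : SL2R) : Matrix (Fin 2) (Fin 2) ℝ :=
  (g.1)ᵀ * M * g.1

variable (M : Matrix (Fin 2) (Fin 2) ℝ) (g h : SL2R)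

theorem formComp_one : formComp M 1 = M := by
  simp [formComp]

theorem formComp_mul : formComp M (g * h) = formComp (formComp M g) h := by
  simp only [formComp, coe_mul_SL2R, transpose_mul, Matrix.mul_assoc]

theorem formComp_formComp_inv : formComp (formComp M g) g⁻¹ = M := by
  rw [← formComp_mul, mul_inv_cancel, formComp_one]

theorem formComp_eq_iff {M M' : Matrix (Fin 2) (Fin 2) ℝ} {g : SL2R} :
    formComp M g = M' ↔ M = formComp M' g⁻¹ := by
  constructor
  · rintro rfl
    rw [formComp_formComp_inv]
  · rintro rfl
    simpa using formComp_formComp_inv M' g⁻¹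

theorem det_formComp : (formComp M g).det = M.det := by
  rw [formComp, det_mul, det_mul, det_transpose, g.2, one_mul, mul_one]

variable {M}

theorem isSymm_formComp (hM : M.IsSymm) : (formComp M g).IsSymm := by
  rw [IsSymm, formComp, transpose_mul, transpose_mul, transpose_transpose, hM.eq, Matrix.mul_assoc]

theorem formComp_apply_zero_zero (hM : M.IsSymm) :
    formComp M g 0 0 =
      M 0 0 * g.1 0 0 ^ 2 + 2 * M 0 1 * g.1 0 0 * g.1 1 0 + M 1 1 * g.1 1 0 ^ 2 := by
  simp only [formComp, Matrix.mul_apply, Fin.sum_univ_two, transpose_apply]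
  rw [hM.apply 0 1]
  ring

theorem formComp_apply_zero_one (hM : M.IsSymm) :
    formComp M g 0 1 = M 0 0 * g.1 0 0 * g.1 0 1 +
      M 0 1 * (g.1 0 0 * g.1 1 1 + g.1 0 1 * g.1 1 0) + M 1 1 * g.1 1 0 * g.1 1 1 := by
  simp only [formComp, Matrix.mul_apply, Fin.sum_univ_two, transpose_apply]
  rw [hM.apply 0 1]
  ring

theorem formComp_apply_one_one (hM : M.IsSymm) :
    formComp M g 1 1 =
      M 0 0 * g.1 0 1 ^ 2 + 2 * M 0 1 * g.1 0 1 * g.1 1 1 + M 1 1 * g.1 1 1 ^ 2 := by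
  simp only [formComp, Matrix.mul_apply, Fin.sum_univ_two, transpose_apply]
  rw [hM.apply 0 1]
  ring

theorem mul_apply_eq_of_isSymm (hM : M.IsSymm) : M 0 0 * M 1 1 = M.det + M 0 1 ^ 2 := by
  rw [det_fin_two, hM.apply 0 1]
  ring

theorem mul_formComp_apply_zero_zero (hM : M.IsSymm) :
    M 0 0 * formComp M g 0 0 =
      (M 0 0 * g.1 0 0 + M 0 1 * g.1 1 0) ^ 2 + M.det * g.1 1 0 ^ 2 := by
  rw [formComp_apply_zero_zero g hM]
  linear_combination g.1 1 0 ^ 2 * mul_apply_eq_of_isSymm hM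

theorem formComp_apply_zero_zero_pos (hM : M.IsSymm) (h0 : 0 < M 0 0) (hdet : 0 < M.det) :
    0 < formComp M g 0 0 := by
  refine pos_of_mul_pos_right ?_ h0.le
  rw [mul_formComp_apply_zero_zero g hM]
  rcases eq_or_ne (g.1 1 0) 0 with hr | hr
  · have hp : g.1 0 0 ≠ 0 := fun hp => by simpa [hp, hr] using det_eq_one_SL2R g
    rw [hr, mul_zero, add_zero]
    positivity
  · positivity

variable {g}

theorem formComp_eq_self_iff (hM : M.IsSymm) (h0 : M 0 0 ≠ 0) :
    formComp M g = M ↔ M 0 0 * g.1 0 1 = -(M 1 1 * g.1 1 0) ∧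
      M 0 0 * (g.1 0 0 - g.1 1 1) = -(2 * M 0 1 * g.1 1 0) := by
  have hdet := det_eq_one_SL2R g
  have h00 := formComp_apply_zero_zero g hM
  have h01 := formComp_apply_zero_one g hM
  constructor
  · intro h
    rw [h] at h00 h01
    exact ⟨by linear_combination g.1 0 1 * h00 - g.1 0 0 * h01 -
        (M 0 1 * g.1 0 0 + M 1 1 * g.1 1 0) * hdet,
      by linear_combination -g.1 1 1 * h00 + g.1 1 0 * h01 -
        (M 0 0 * g.1 0 0 + M 0 1 * g.1 1 0) * hdet⟩
  · rintro ⟨hq, hs⟩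
    have e00 : formComp M g 0 0 = M 0 0 := by
      linear_combination h00 + g.1 0 0 * hs + g.1 1 0 * hq + M 0 0 * hdet
    have e01 : formComp M g 0 1 = M 0 1 := by
      linear_combination h01 + g.1 0 1 * hs + g.1 1 1 * hq + M 0 1 * hdet
    have e11 : formComp M g 1 1 = M 1 1 := by
      refine mul_left_cancel₀ h0 ?_
      have h := mul_apply_eq_of_isSymm (isSymm_formComp g hM)
      rwa [det_formComp, e00, e01, ← mul_apply_eq_of_isSymm hM] at h
    ext i j
    fin_cases i <;> fin_cases j
    · exact e00
    · exact e01
    · exact ((isSymm_formComp g hM).apply 0 1).trans (e01.trans (hM.apply 0 1).symm)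
    · exact e11

variable (g)

theorem formComp_conj_eq_iff {k : SL2R} :
    formComp M (g * k * g⁻¹) = M ↔ formComp (formComp M g) k = formComp M g := by
  rw [formComp_mul, formComp_mul, eq_comm, ← formComp_eq_iff, eq_comm]

theorem stabOrder_formComp {Γ : Subgroup SL2R} (hg : g ∈ Γ) :
    stabOrder Γ (formComp M g) = stabOrder Γ M := by
  refine congrArg (· / 2) (Nat.card_congr ((MulAut.conj g).toEquiv.subtypeEquiv fun k => ?_))
  refine and_congr ?_ (formComp_conj_eq_iff g).symm
  change k ∈ Γ ↔ g * k * g⁻¹ ∈ Γ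
  rw [Subgroup.mul_mem_cancel_right _ (inv_mem hg), Subgroup.mul_mem_cancel_left _ hg]

end FormAction

section Moebius

theorem moebius_coe (g : SL2R) (z : UpperHalfPlane) : moebius g z = ↑(g • z) := by
  rw [moebius, UpperHalfPlane.coe_specialLinearGroup_apply]
  rfl

theorem im_moebius_pos (g : SL2R) {z : ℂ} (hz : 0 < z.im) : 0 < (moebius g z).im :=
  moebius_coe g ⟨z, hz⟩ ▸ (g • (⟨z, hz⟩ : UpperHalfPlane)).im_pos

theorem moebius_mul (g h : SL2R) {z : ℂ} (hz : 0 < z.im) :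
    moebius (g * h) z = moebius g (moebius h z) := by
  lift z to UpperHalfPlane using hz
  rw [moebius_coe, moebius_coe, moebius_coe, mul_smul]

theorem moebius_one {z : ℂ} (hz : 0 < z.im) : moebius 1 z = z := by
  lift z to UpperHalfPlane using hz
  rw [moebius_coe, one_smul]

theorem moebius_denom_ne_zero (g : SL2R) {z : ℂ} (hz : 0 < z.im) :
    (g.1 1 0 : ℂ) * z + g.1 1 1 ≠ 0 :=
  UpperHalfPlane.denom_ne_zero g ⟨z, hz⟩

theorem moebius_eq_of_mem_closure {S : Set SL2R} {f : ℂ → ℂ}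
    (hf : ∀ g ∈ S, ∀ z : ℂ, 0 < z.im → f (moebius g z) = f z) {g : SL2R}
    (hg : g ∈ Subgroup.closure S) {z : ℂ} (hz : 0 < z.im) : f (moebius g z) = f z := by
  induction hg using Subgroup.closure_induction generalizing z with
  | mem g hg => exact hf g hg z hz
  | one => rw [moebius_one hz]
  | mul g h _ _ ihg ihh => rw [moebius_mul g h hz, ihg (im_moebius_pos h hz), ihh hz]
  | inv g _ ih => rw [← ih (im_moebius_pos g⁻¹ hz), ← moebius_mul g _ hz, mul_inv_cancel,
      moebius_one hz]

end Moebius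

section CMPoint

variable {M : Matrix (Fin 2) (Fin 2) ℝ}

theorem im_cmPointC_pos (h0 : 0 < M 0 0) (hdet : 0 < M.det) : 0 < (cmPointC M).im := by
  rw [cmPointC, div_ofReal_im, add_im, ofReal_im, I_mul_im, ofReal_re, zero_add]
  positivity

theorem cmPointC_isRoot (hM : M.IsSymm) (h0 : 0 < M 0 0) (hdet : 0 < M.det) :
    (M 0 0 : ℂ) * cmPointC M ^ 2 + 2 * M 0 1 * cmPointC M + M 1 1 = 0 := by
  have hA : (M 0 0 : ℂ) ≠ 0 := ofReal_ne_zero.2 h0.ne'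
  have hα : (M 0 0 : ℂ) * cmPointC M = -(M 0 1 : ℂ) + I * √M.det := by
    rw [cmPointC, mul_div_cancel₀ _ hA, ofReal_neg]
  have hAC := congrArg ofReal (mul_apply_eq_of_isSymm hM)
  have hD := congrArg ofReal (Real.sq_sqrt hdet.le)
  push_cast at hAC hD
  refine mul_left_cancel₀ hA ?_
  linear_combination (M 0 0 * cmPointC M + M 0 1 + I * √M.det) * hα + hAC - hD
    + (√M.det : ℂ) ^ 2 * I_sq

theorem eq_cmPointC_of_isRoot (hM : M.IsSymm) (h0 : 0 < M 0 0) (hdet : 0 < M.det) {z : ℂ}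
    (hz : 0 < z.im) (h : (M 0 0 : ℂ) * z ^ 2 + 2 * M 0 1 * z + M 1 1 = 0) :
    z = cmPointC M := by
  have hprod : (z - cmPointC M) * (M 0 0 * (z + cmPointC M) + 2 * M 0 1) = 0 := by
    linear_combination h - cmPointC_isRoot hM h0 hdet
  refine sub_eq_zero.1 ((mul_eq_zero.1 hprod).resolve_right fun hsum => ?_)
  have him := congrArg im hsum
  rw [add_im, im_ofReal_mul, add_im, zero_im, show (2 * (M 0 1 : ℂ)).im = 0 by simp] at him
  have := mul_pos h0 (add_pos hz (im_cmPointC_pos h0 hdet))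
  linarith

theorem cmPointC_formComp (hM : M.IsSymm) (h0 : 0 < M 0 0) (hdet : 0 < M.det) (g : SL2R) :
    cmPointC (formComp M g) = moebius g⁻¹ (cmPointC M) := by
  have hα := im_cmPointC_pos h0 hdet
  have hw := im_moebius_pos g⁻¹ hα
  set w := moebius g⁻¹ (cmPointC M) with hw_def
  have hgw : cmPointC M * (g.1 1 0 * w + g.1 1 1) = g.1 0 0 * w + g.1 0 1 := by
    rw [← eq_div_iff (moebius_denom_ne_zero g hw)]
    change cmPointC M = moebius g w
    rw [hw_def, ← moebius_mul _ _ hα, mul_inv_cancel, moebius_one hα]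
  refine (eq_cmPointC_of_isRoot (isSymm_formComp g hM) (formComp_apply_zero_zero_pos g hM h0 hdet)
    ((det_formComp M g).symm ▸ hdet) hw ?_).symm
  rw [formComp_apply_zero_zero g hM, formComp_apply_zero_one g hM, formComp_apply_one_one g hM]
  push_cast
  have hroot := cmPointC_isRoot hM h0 hdet
  generalize cmPointC M = α at *
  linear_combination (g.1 1 0 * w + g.1 1 1 : ℂ) ^ 2 * hroot
    - (M 0 0 * (α * (g.1 1 0 * w + g.1 1 1) + g.1 0 0 * w + g.1 0 1)
    + 2 * M 0 1 * (g.1 1 0 * w + g.1 1 1)) * hgw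

end CMPoint

section ClassTrace

theorem classTrace_eq_of_forall_eq_formComp {Γ : Subgroup SL2R} {f : ℂ → ℂ}
    {S : Set (Matrix (Fin 2) (Fin 2) ℝ)} {M : Matrix (Fin 2) (Fin 2) ℝ} (hMS : M ∈ S)
    (hM : M.IsSymm) (h0 : 0 < M 0 0) (hdet : 0 < M.det)
    (hS : ∀ Q ∈ S, ∃ g ∈ Γ, Q = formComp M g)
    (hf : ∀ g ∈ Γ, ∀ z : ℂ, 0 < z.im → f (moebius g z) = f z) :
    classTrace Γ f S = f (cmPointC M) / stabOrder Γ M := by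
  have hmk (O : Quot (formRel Γ S)) : O = Quot.mk _ ⟨M, hMS⟩ := by
    rcases O with ⟨Q, hQ⟩
    exact (Quot.sound (hS Q hQ)).symm
  rw [classTrace, finsum_eq_single _ (Quot.mk _ ⟨M, hMS⟩) fun O hO => absurd (hmk O) hO]
  obtain ⟨g, hg, hQ⟩ := hS _ (Quot.out (Quot.mk (formRel Γ S) ⟨M, hMS⟩)).2
  rw [hQ, cmPointC_formComp hM h0 hdet, hf _ (inv_mem hg) _ (im_cmPointC_pos h0 hdet),
    stabOrder_formComp g hg]

end ClassTrace

section AtkinLehner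

/-- The Atkin–Lehner matrix `e^{-1/2} [[xe, y], [zef, we]]` of level `ef`, with the scalar
`e^{-1/2}` absorbed into the entries. -/
noncomputable def atkinLehner (e f : ℕ) (x y z w : ℤ) (he : e ≠ 0)
    (h : (e : ℤ) * x * w - f * y * z = 1) : SL2R :=
  ⟨!![x * √e, y / √e; z * f * √e, w * √e], by
    have hR : (e : ℝ) * x * w - f * y * z = 1 := mod_cast h
    have hs : √(e : ℝ) ≠ 0 := by positivity
    rw [det_fin_two_of]
    field_simp
    rw [Real.sq_sqrt (Nat.cast_nonneg e)]
    linear_combination hR⟩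

theorem exists_eq_atkinLehner {e : ℕ} (f : ℕ) (he : e ≠ 0) {x y z w : ℤ} {g : SL2R}
    (hg : g.1 = !![x * √e, y / √e; z * f * √e, w * √e]) :
    ∃ h, g = atkinLehner e f x y z w he h := by
  have hs : √(e : ℝ) ≠ 0 := by positivity
  have hdet := g.2
  rw [hg, det_fin_two_of] at hdet
  field_simp at hdet
  rw [Real.sq_sqrt (Nat.cast_nonneg e)] at hdet
  have h : (e : ℝ) * x * w - f * y * z = 1 := by linear_combination hdet
  exact ⟨mod_cast h, Subtype.ext hg⟩

theorem inv_sqrt_smul_eq (e f : ℕ) (x y z w : ℤ) :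
    (√e)⁻¹ • !![(x : ℝ) * e, (y : ℝ); (z : ℝ) * (e * f : ℕ), (w : ℝ) * e] =
      !![x * √e, y / √e; z * f * √e, w * √e] := by
  have hs (t : ℝ) : (√e)⁻¹ * (t * e) = t * √e := by
    rw [mul_left_comm, inv_mul_eq_div, Real.div_sqrt]
  simp only [smul_of, smul_cons, smul_eq_mul, smul_empty, Nat.cast_mul, hs,
    inv_mul_eq_div _ (y : ℝ), mul_left_comm (z : ℝ) (e : ℝ), mul_comm (e : ℝ) (z * f)]

theorem exists_common_factorization {e f e' f' : ℕ} (he : e ≠ 0) (he' : e' ≠ 0)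
    (h : e * f = e' * f') :
    ∃ d e₁ e₂ k : ℕ, e = d * e₁ ∧ e' = d * e₂ ∧ f = e₂ * k ∧ f' = e₁ * k := by
  obtain ⟨e₁, e₂, hcop, h₁, h₂⟩ := Nat.exists_coprime e e'
  set d := e.gcd e'
  have hd : 0 < d := Nat.gcd_pos_of_pos_left _ (Nat.pos_of_ne_zero he)
  have hcancel : e₁ * f = e₂ * f' := by
    rw [h₁, h₂, mul_right_comm, mul_right_comm e₂] at h
    exact Nat.eq_of_mul_eq_mul_right hd h
  obtain ⟨k, rfl⟩ := hcop.symm.dvd_of_dvd_mul_left ⟨f', hcancel⟩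
  refine ⟨d, e₁, e₂, k, h₁.trans (mul_comm _ _), h₂.trans (mul_comm _ _), rfl, ?_⟩
  have he₂ : 0 < e₂ := Nat.pos_of_ne_zero fun h0 => he' (by rw [h₂, h0, zero_mul])
  exact Nat.eq_of_mul_eq_mul_left he₂ (by rw [← hcancel, mul_left_comm])

theorem one_eq_atkinLehner (N : ℕ) :
    (1 : SL2R) = atkinLehner 1 N 1 0 0 1 one_ne_zero (by simp) := by
  refine Subtype.ext ?_
  simp [atkinLehner, one_fin_two]

theorem neg_atkinLehner {e f : ℕ} {x y z w : ℤ} {he : e ≠ 0}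
    {h : (e : ℤ) * x * w - f * y * z = 1} :
    -atkinLehner e f x y z w he h =
      atkinLehner e f (-x) (-y) (-z) (-w) he (by linear_combination h) := by
  refine Subtype.ext ?_
  rw [Matrix.SpecialLinearGroup.coe_neg]
  simp [atkinLehner, neg_div]

theorem atkinLehner_inv {e f : ℕ} {x y z w : ℤ} {he : e ≠ 0}
    {h : (e : ℤ) * x * w - f * y * z = 1} :
    (atkinLehner e f x y z w he h)⁻¹ =
      atkinLehner e f w (-y) (-z) x he (by linear_combination h) := by
  refine Subtype.ext ?_
  rw [coe_inv_SL2R]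
  simp [atkinLehner, neg_div]

theorem atkinLehner_mul {d e₁ e₂ k : ℕ} {x y z w x' y' z' w' : ℤ} {he he'}
    {h : ((d * e₁ : ℕ) : ℤ) * x * w - (e₂ * k : ℕ) * y * z = 1}
    {h' : ((d * e₂ : ℕ) : ℤ) * x' * w' - (e₁ * k : ℕ) * y' * z' = 1} :
    atkinLehner (d * e₁) (e₂ * k) x y z w he h * atkinLehner (d * e₂) (e₁ * k) x' y' z' w' he' h' =
      atkinLehner (e₁ * e₂) (d * k) (d * x * x' + k * y * z') (e₁ * x * y' + e₂ * y * w')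
        (e₂ * z * x' + e₁ * w * z') (k * z * y' + d * w * w')
        (mul_ne_zero (right_ne_zero_of_mul he) (right_ne_zero_of_mul he'))
        (by push_cast at h h' ⊢
            linear_combination (d * e₂ * x' * w' - e₁ * k * y' * z') * h + h') := by
  have hsqrt {n : ℕ} (hn : n ≠ 0) : √(n : ℝ) ≠ 0 := by positivity
  have hd := hsqrt (left_ne_zero_of_mul he)
  have h₁ := hsqrt (right_ne_zero_of_mul he)
  have h₂ := hsqrt (right_ne_zero_of_mul he')
  have hd' := Real.sq_sqrt (Nat.cast_nonneg (α := ℝ) d)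
  have h₁' := Real.sq_sqrt (Nat.cast_nonneg (α := ℝ) e₁)
  have h₂' := Real.sq_sqrt (Nat.cast_nonneg (α := ℝ) e₂)
  refine Subtype.ext ?_
  rw [coe_mul_SL2R]
  simp only [atkinLehner, Nat.cast_mul, Real.sqrt_mul (Nat.cast_nonneg _), mul_fin_two]
  push_cast
  generalize √(d : ℝ) = D at *
  generalize √(e₁ : ℝ) = E₁ at *
  generalize √(e₂ : ℝ) = E₂ at *
  rw [← hd', ← h₁', ← h₂']
  congr! 3
  all_goals
    field_simp
    try ring

theorem exists_eq_atkinLehner_of_mem_gamma0 {N : ℕ} {g : SL2R} (hg : g ∈ Gamma0SL2R N) :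
    ∃ x y z w h, g = atkinLehner 1 N x y z w one_ne_zero h := by
  obtain ⟨γ, hγ, rfl⟩ := hg
  obtain ⟨z, hz⟩ := (ZMod.intCast_zmod_eq_zero_iff_dvd _ N).1 (CongruenceSubgroup.Gamma0_mem.1 hγ)
  refine ⟨γ.1 0 0, γ.1 0 1, z, γ.1 1 1, exists_eq_atkinLehner N one_ne_zero ?_⟩
  have hz' : ((γ.1 1 0 : ℤ) : ℝ) = z * N := by
    rw [hz]
    push_cast
    ring
  ext i j
  fin_cases i <;> fin_cases j <;> simp [hz']

theorem exists_eq_atkinLehner_of_mem_atkinLehnerSet {e f : ℕ} (he : e ≠ 0) {g : SL2R}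
    (hg : g ∈ atkinLehnerSet (e * f) e) : ∃ x y z w h, g = atkinLehner e f x y z w he h := by
  obtain ⟨x, y, z, w, hg⟩ := hg
  exact ⟨x, y, z, w, exists_eq_atkinLehner f he (hg.trans (inv_sqrt_smul_eq e f x y z w))⟩

theorem atkinLehner_mem_frickeGroup {e f : ℕ} {x y z w : ℤ} {he : e ≠ 0}
    {h : (e : ℤ) * x * w - f * y * z = 1} :
    atkinLehner e f x y z w he h ∈ FrickeGroup (e * f) := by
  have hcop : Nat.Coprime e f :=
    Nat.isCoprime_iff_coprime.1 ⟨x * w, -(y * z), by linear_combination h⟩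
  refine Subgroup.subset_closure (Or.inr (Set.mem_biUnion (x := e) ⟨dvd_mul_right e f, ?_⟩ ?_))
  · rwa [Nat.mul_div_cancel_left f (Nat.pos_of_ne_zero he)]
  · exact ⟨x, y, z, w, (inv_sqrt_smul_eq e f x y z w).symm⟩

theorem mem_frickeGroup_iff {N : ℕ} {g : SL2R} :
    g ∈ FrickeGroup N ↔ ∃ e f x y z w he h, e * f = N ∧ g = atkinLehner e f x y z w he h := by
  constructor
  · intro hg
    induction hg using Subgroup.closure_induction with
    | mem g hg =>
      rcases hg with hg | hg
      · obtain ⟨x, y, z, w, h, rfl⟩ := exists_eq_atkinLehner_of_mem_gamma0 hg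
        exact ⟨1, N, x, y, z, w, one_ne_zero, h, one_mul N, rfl⟩
      · obtain ⟨e, ⟨⟨f, rfl⟩, hcop⟩, hg⟩ := Set.mem_iUnion₂.1 hg
        have he : e ≠ 0 := by
          rintro rfl
          simp at hcop
        obtain ⟨x, y, z, w, h, rfl⟩ := exists_eq_atkinLehner_of_mem_atkinLehnerSet he hg
        exact ⟨e, f, x, y, z, w, he, h, rfl, rfl⟩
    | one => exact ⟨1, N, 1, 0, 0, 1, one_ne_zero, by simp, one_mul N, one_eq_atkinLehner N⟩
    | mul g g' _ _ ihg ihg' =>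
      obtain ⟨e, f, x, y, z, w, he, h, rfl, rfl⟩ := ihg
      obtain ⟨e', f', x', y', z', w', he', h', hN, rfl⟩ := ihg'
      obtain ⟨d, e₁, e₂, k, rfl, rfl, rfl, rfl⟩ := exists_common_factorization he he' hN.symm
      exact ⟨_, _, _, _, _, _, _, _, by ring, atkinLehner_mul⟩
    | inv g _ ih =>
      obtain ⟨e, f, x, y, z, w, he, h, rfl, rfl⟩ := ih
      exact ⟨e, f, _, _, _, _, he, _, rfl, atkinLehner_inv⟩
  · rintro ⟨e, f, x, y, z, w, he, h, rfl, rfl⟩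
    exact atkinLehner_mem_frickeGroup

theorem moebius_atkinLehner {e f : ℕ} {x y z w : ℤ} {he : e ≠ 0}
    {h : (e : ℤ) * x * w - f * y * z = 1} (τ : ℂ) :
    moebius (atkinLehner e f x y z w he h) τ = (x * e * τ + y) / (z * f * e * τ + w * e) := by
  have hs : (√(e : ℝ) : ℂ) ≠ 0 := ofReal_ne_zero.2 (by positivity)
  have hsq : (√(e : ℝ) : ℂ) ^ 2 = e := mod_cast Real.sq_sqrt (Nat.cast_nonneg e)
  rw [moebius, ← mul_div_mul_left _ _ hs, ← hsq]
  simp only [atkinLehner, of_apply, cons_val', cons_val_zero, cons_val_one, cons_val_fin_one]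
  push_cast
  field_simp

theorem formComp_formMat_atkinLehner {e f : ℕ} (a b c : ℤ) {x y z w : ℤ} {he : e ≠ 0}
    {h : (e : ℤ) * x * w - f * y * z = 1} :
    formComp (formMat ((e * f : ℕ) * a) b c) (atkinLehner e f x y z w he h) =
      formMat ((e * f : ℕ) * (e * a * x ^ 2 + b * x * z + f * c * z ^ 2))
        (2 * (e * f : ℕ) * (a * x * y + c * z * w) + b * (e * x * w + f * y * z))
        (f * a * y ^ 2 + b * y * w + e * c * w ^ 2) := by
  have hs : √(e : ℝ) ≠ 0 := by positivity
  have hsq := Real.sq_sqrt (Nat.cast_nonneg (α := ℝ) e)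
  rw [formComp, atkinLehner, eta_fin_two (transpose _)]
  simp only [formMat, transpose_apply, of_apply, cons_val', cons_val_zero, cons_val_one,
    cons_val_fin_one, mul_fin_two]
  push_cast
  generalize √(e : ℝ) = s at *
  rw [← hsq]
  simp only [EmbeddingLike.apply_eq_iff_eq, vecCons_inj, and_true]
  refine ⟨⟨?_, ?_⟩, ?_, ?_⟩ <;> field_simp <;> ring

end AtkinLehner

section Forms

variable {d : ℤ} {N : ℕ} {Q : Matrix (Fin 2) (Fin 2) ℝ}

theorem isSymm_of_mem_QdN (hQ : Q ∈ QdN d N) : Q.IsSymm := by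
  obtain ⟨a, b, c, rfl, -⟩ := hQ
  exact IsSymm.ext fun i j => by fin_cases i <;> fin_cases j <;> rfl

theorem apply_zero_zero_pos_of_mem_QdN (hQ : Q ∈ QdN d N) : 0 < Q 0 0 := by
  obtain ⟨a, b, c, rfl, ha, -⟩ := hQ
  exact Int.cast_pos.2 ha

theorem exists_apply_zero_zero_eq_mul (hQ : Q ∈ QdN d N) : ∃ n : ℕ, Q 0 0 = N * n := by
  obtain ⟨_, b, c, rfl, ha, -, a, rfl⟩ := hQ
  lift a to ℕ using (pos_of_mul_pos_right ha (Nat.cast_nonneg N)).le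
  exact ⟨a, by simp [formMat]⟩

theorem det_of_mem_QdN (hQ : Q ∈ QdN d N) : Q.det = d / 4 := by
  obtain ⟨a, b, c, rfl, -, hdisc, -⟩ := hQ
  have hdiscR : (b : ℝ) ^ 2 - 4 * a * c = -d := mod_cast hdisc
  rw [formMat, det_fin_two_of]
  linear_combination -hdiscR / 4

theorem det_pos_of_mem_QdN (hd : 0 < d) (hQ : Q ∈ QdN d N) : 0 < Q.det := by
  rw [det_of_mem_QdN hQ]
  exact div_pos (Int.cast_pos.2 hd) four_pos

theorem formComp_mem_QdN (hd : 0 < d) {g : SL2R} (hg : g ∈ FrickeGroup N) (hQ : Q ∈ QdN d N) :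
    formComp Q g ∈ QdN d N := by
  have hpos := formComp_apply_zero_zero_pos g (isSymm_of_mem_QdN hQ)
    (apply_zero_zero_pos_of_mem_QdN hQ) (det_pos_of_mem_QdN hd hQ)
  obtain ⟨_, b, c, rfl, -, hdisc, a, rfl⟩ := hQ
  obtain ⟨e, f, x, y, z, w, he, h, rfl, rfl⟩ := mem_frickeGroup_iff.1 hg
  rw [formComp_formMat_atkinLehner] at hpos ⊢
  refine ⟨_, _, _, rfl, Int.cast_pos.1 hpos, ?_, dvd_mul_right _ _⟩
  push_cast at hdisc ⊢
  linear_combination hdisc + (b ^ 2 - 4 * e * f * a * c) * (e * x * w - f * y * z + 1) * h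

end Forms

section Generators

/-- The translation `τ ↦ τ + k`. -/
noncomputable def shift (k : ℤ) : SL2R := atkinLehner 1 6 1 k 0 1 one_ne_zero (by simp)

/-- The Atkin–Lehner involution `τ ↦ (3τ + 1) / (6τ + 3)` of level `6`. -/
noncomputable def atkinLehnerThree : SL2R := atkinLehner 3 2 1 1 1 1 three_ne_zero (by simp)

/-- The Fricke involution `τ ↦ -1 / (6τ)` of level `6`. -/
noncomputable def frickeInvolution : SL2R :=
  atkinLehner 6 1 0 (-1) 1 0 (by simp) (by simp)

/-- Generators of the Fricke group of level `6`; see `frickeGroup_six_le_closure`. -/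
def frickeGenerators : Set SL2R := Set.range shift ∪ {atkinLehnerThree, frickeInvolution}

theorem shift_mem (k : ℤ) : shift k ∈ Subgroup.closure frickeGenerators :=
  Subgroup.subset_closure (Or.inl ⟨k, rfl⟩)

theorem atkinLehnerThree_mem : atkinLehnerThree ∈ Subgroup.closure frickeGenerators :=
  Subgroup.subset_closure (Or.inr (Or.inl rfl))

theorem frickeInvolution_mem : frickeInvolution ∈ Subgroup.closure frickeGenerators :=
  Subgroup.subset_closure (Or.inr (Or.inr rfl))

theorem closure_frickeGenerators_le : Subgroup.closure frickeGenerators ≤ FrickeGroup 6 := by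
  rw [Subgroup.closure_le]
  rintro _ (⟨k, rfl⟩ | rfl | rfl)
  · exact mem_frickeGroup_iff.2 ⟨_, _, _, _, _, _, _, _, by norm_num, rfl⟩
  · exact mem_frickeGroup_iff.2 ⟨_, _, _, _, _, _, _, _, by norm_num, rfl⟩
  · exact mem_frickeGroup_iff.2 ⟨_, _, _, _, _, _, _, _, by norm_num, rfl⟩

theorem neg_one_mem : (-1 : SL2R) ∈ Subgroup.closure frickeGenerators := by
  suffices h : frickeInvolution * frickeInvolution = -1 from
    h ▸ mul_mem frickeInvolution_mem frickeInvolution_mem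
  rw [one_eq_atkinLehner 6, neg_atkinLehner]
  exact atkinLehner_mul (d := 6) (e₁ := 1) (e₂ := 1) (k := 1)

theorem mem_closure_of_apply_one_zero_eq_zero {g : SL2R} (hg : g ∈ FrickeGroup 6)
    (h0 : g.1 1 0 = 0) : g ∈ Subgroup.closure frickeGenerators := by
  obtain ⟨e, f, x, y, z, w, he, h, hef, rfl⟩ := mem_frickeGroup_iff.1 hg
  have hf : f ≠ 0 := by rintro rfl; simp at hef
  obtain rfl : z = 0 := by simpa [atkinLehner, he, hf] using h0
  obtain rfl : e = 1 := by
    have : (e : ℤ) ∣ 1 := ⟨x * w, by linear_combination -h⟩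
    exact Nat.dvd_one.1 (mod_cast this)
  obtain rfl : f = 6 := by omega
  have hxw : x * w = 1 := by linear_combination h
  rcases Int.eq_one_or_neg_one_of_mul_eq_one' hxw with ⟨rfl, rfl⟩ | ⟨rfl, rfl⟩
  · convert shift_mem y using 1
    exact Subtype.ext (by simp [shift, atkinLehner])
  · convert mul_mem neg_one_mem (shift_mem (-y)) using 1
    simp only [shift, neg_one_mul, neg_atkinLehner, neg_neg, neg_zero]

theorem mul_formComp_shift_mul_frickeInvolution {M : Matrix (Fin 2) (Fin 2) ℝ} (hM : M.IsSymm)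
    (k : ℤ) : M 0 0 * formComp M (shift k * frickeInvolution) 0 0 =
      6 * ((M 0 1 + M 0 0 * k) ^ 2 + M.det) := by
  have h : (shift k * frickeInvolution).1 = !![k * √6, -1 / √6; √6, 0] := by
    rw [coe_mul_SL2R]
    simp [shift, frickeInvolution, atkinLehner]
  rw [mul_formComp_apply_zero_zero _ hM, h, of_apply, of_apply]
  simp only [cons_val_zero, cons_val_one]
  linear_combination ((M 0 1 + M 0 0 * k) ^ 2 + M.det) * Real.sq_sqrt (show (0 : ℝ) ≤ 6 by simp)

theorem mul_formComp_shift_mul_atkinLehnerThree {M : Matrix (Fin 2) (Fin 2) ℝ} (hM : M.IsSymm)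
    (k : ℤ) : M 0 0 * formComp M (shift k * atkinLehnerThree) 0 0 =
      3 * ((M 0 0 + 2 * (M 0 1 + M 0 0 * k)) ^ 2 + 4 * M.det) := by
  have h : (shift k * atkinLehnerThree).1 =
      !![√3 + k * (2 * √3), 1 / √3 + k * √3; 2 * √3, √3] := by
    rw [coe_mul_SL2R]
    simp [shift, atkinLehnerThree, atkinLehner]
  rw [mul_formComp_apply_zero_zero _ hM, h, of_apply, of_apply]
  simp only [cons_val_zero, cons_val_one]
  linear_combination ((M 0 0 + 2 * (M 0 1 + M 0 0 * k)) ^ 2 + 4 * M.det) *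
    Real.sq_sqrt (show (0 : ℝ) ≤ 3 by simp)

-- A translation brings `b = M 0 1 / M 0 0` into `[-3/4, 1/4)`; then the Fricke involution lowers the
-- leading coefficient if `-1/4 ≤ b`, and `W₃` does if `b < -1/4`.
theorem exists_formComp_apply_zero_zero_lt {M : Matrix (Fin 2) (Fin 2) ℝ} (hM : M.IsSymm)
    (h0 : 0 < M 0 0) (hdet : 48 * M.det < M 0 0 ^ 2) :
    ∃ h ∈ Subgroup.closure frickeGenerators, formComp M h 0 0 < M 0 0 := by
  obtain ⟨k, ⟨hk₁, hk₂⟩, -⟩ := existsUnique_add_zsmul_mem_Ico one_pos (M 0 1 / M 0 0) (-3 / 4)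
  set b := M 0 1 / M 0 0 + k • 1 with hb
  have hb_mul : M 0 1 + M 0 0 * k = M 0 0 * b := by
    rw [hb, zsmul_one]
    field_simp
  have hlt {h : SL2R} (hh : M 0 0 * formComp M h 0 0 < M 0 0 ^ 2) :
      formComp M h 0 0 < M 0 0 := lt_of_mul_lt_mul_left (hh.trans_eq (sq _)) h0.le
  have hA := sq_pos_of_pos h0
  rcases le_or_gt (-1 / 4) b with hb4 | hb4
  · refine ⟨shift k * frickeInvolution, mul_mem (shift_mem k) frickeInvolution_mem, hlt ?_⟩
    rw [mul_formComp_shift_mul_frickeInvolution hM, hb_mul]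
    have : b ^ 2 < 1 / 8 := by nlinarith
    nlinarith
  · refine ⟨shift k * atkinLehnerThree, mul_mem (shift_mem k) atkinLehnerThree_mem, hlt ?_⟩
    rw [mul_formComp_shift_mul_atkinLehnerThree hM, hb_mul]
    have : (1 + 2 * b) ^ 2 ≤ 1 / 4 := by nlinarith
    nlinarith

theorem formComp_vecMulVec (v : Fin 2 → ℝ) (g : SL2R) :
    formComp (vecMulVec v v) g = vecMulVec (v ᵥ* g.1) (v ᵥ* g.1) := by
  rw [formComp, mul_vecMulVec, vecMulVec_mul, mulVec_transpose]

theorem exists_sq_apply_one_zero_eq {N : ℕ} {g : SL2R} (hg : g ∈ FrickeGroup N) :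
    ∃ n : ℕ, g.1 1 0 ^ 2 = N * n := by
  obtain ⟨e, f, x, y, z, w, he, h, rfl, rfl⟩ := mem_frickeGroup_iff.1 hg
  refine ⟨f * z.natAbs ^ 2, ?_⟩
  have hsq := Real.sq_sqrt (Nat.cast_nonneg (α := ℝ) e)
  have hz : ((z.natAbs : ℕ) : ℝ) ^ 2 = (z : ℝ) ^ 2 := by
    rw [Nat.cast_natAbs, Int.cast_abs, sq_abs]
  change (z * f * √(e : ℝ)) ^ 2 = _
  push_cast
  rw [hz]
  linear_combination (z * f : ℝ) ^ 2 * hsq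

-- The descent is applied to the degenerate form `(cX + dY)²`, where `(c, d)` is the lower row.
theorem frickeGroup_six_le_closure : FrickeGroup 6 ≤ Subgroup.closure frickeGenerators := by
  intro g hg
  obtain ⟨n, hn⟩ := exists_sq_apply_one_zero_eq hg
  induction n using Nat.strong_induction_on generalizing g with
  | _ n ih =>
    rcases eq_or_ne (g.1 1 0) 0 with h0 | h0
    · exact mem_closure_of_apply_one_zero_eq_zero hg h0
    have hsymm : (vecMulVec (g.1 1) (g.1 1)).IsSymm := transpose_vecMulVec _ _
    have hpos : 0 < vecMulVec (g.1 1) (g.1 1) 0 0 := mul_self_pos.2 h0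
    obtain ⟨h, hh, hlt⟩ := exists_formComp_apply_zero_zero_lt hsymm hpos (by
      rw [det_vecMulVec, mul_zero]
      positivity)
    have hgh : g * h ∈ FrickeGroup 6 := mul_mem hg (closure_frickeGenerators_le hh)
    obtain ⟨m, hm⟩ := exists_sq_apply_one_zero_eq hgh
    have hmn : m < n := by
      have hrow : (g * h).1 1 0 = (g.1 1 ᵥ* h.1) 0 := rfl
      rw [formComp_vecMulVec, vecMulVec_apply, vecMulVec_apply, ← hrow, ← sq, ← sq, hm, hn] at hlt
      exact_mod_cast lt_of_mul_lt_mul_left hlt (Nat.cast_nonneg 6)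
    exact (Subgroup.mul_mem_cancel_right _ hh).1 (ih m hmn hgh hm)

theorem jnStar_six_moebius {g : SL2R} (hg : g ∈ FrickeGroup 6) {z : ℂ} (hz : 0 < z.im) :
    jnStar 6 (moebius g z) = jnStar 6 z := by
  refine moebius_eq_of_mem_closure ?_ (frickeGroup_six_le_closure hg) hz
  rintro _ (⟨k, rfl⟩ | rfl | rfl) z hz
  · rw [shift, moebius_atkinLehner, ← jnStar_six_add_intCast z k]
    simp
  · rw [atkinLehnerThree, moebius_atkinLehner, ← jnStar_six_three_mul_add_one_div hz]
    norm_num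
  · rw [frickeInvolution, moebius_atkinLehner, ← jnStar_six_neg_one_div hz]
    norm_num

end Generators

section DiscriminantEight

theorem formMat_mem_QdN_eight_six : formMat 6 (-4) 1 ∈ QdN 8 6 :=
  ⟨6, -4, 1, rfl, by norm_num, by norm_num, dvd_rfl⟩

theorem exists_formComp_apply_zero_zero_eq_six {Q : Matrix (Fin 2) (Fin 2) ℝ} (hQ : Q ∈ QdN 8 6) :
    ∃ g ∈ FrickeGroup 6, formComp Q g 0 0 = 6 := by
  obtain ⟨n, hn⟩ := exists_apply_zero_zero_eq_mul hQ
  induction n using Nat.strong_induction_on generalizing Q with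
  | _ n ih =>
    have hpos := apply_zero_zero_pos_of_mem_QdN hQ
    have hn0 : n ≠ 0 := by
      rintro rfl
      simp [hn] at hpos
    rcases eq_or_ne n 1 with rfl | hn1
    · exact ⟨1, one_mem _, by rw [formComp_one, hn]; norm_num⟩
    have hdet : 48 * Q.det < Q 0 0 ^ 2 := by
      have hn2 : (2 : ℝ) ≤ n := by exact_mod_cast show 2 ≤ n by omega
      rw [det_of_mem_QdN hQ, hn]
      push_cast
      nlinarith
    obtain ⟨h, hh, hlt⟩ := exists_formComp_apply_zero_zero_lt (isSymm_of_mem_QdN hQ) hpos hdet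
    have hhF := closure_frickeGenerators_le hh
    have hQh := formComp_mem_QdN (by norm_num) hhF hQ
    obtain ⟨m, hm⟩ := exists_apply_zero_zero_eq_mul hQh
    have hmn : m < n := by
      rw [hm, hn] at hlt
      exact_mod_cast lt_of_mul_lt_mul_left hlt (Nat.cast_nonneg 6)
    obtain ⟨g, hg, h6⟩ := ih m hmn hQh hm
    exact ⟨h * g, mul_mem hhF hg, by rw [formComp_mul, h6]⟩

theorem formComp_formMat_six_shift (b c q : ℤ) :
    formComp (formMat 6 b c) (shift q) = formMat 6 (b + 12 * q) (6 * q ^ 2 + b * q + c) := by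
  refine (formComp_formMat_atkinLehner (e := 1) (f := 6) 1 b c).trans ?_
  congr 1 <;> push_cast <;> ring

theorem formComp_formMat_six_frickeInvolution (b : ℤ) :
    formComp (formMat 6 b 1) frickeInvolution = formMat 6 (-b) 1 := by
  refine (formComp_formMat_atkinLehner (e := 6) (f := 1) 1 b 1).trans ?_
  congr 1 <;> push_cast <;> ring

theorem eq_formComp_of_apply_zero_zero_eq_six {Q : Matrix (Fin 2) (Fin 2) ℝ} (hQ : Q ∈ QdN 8 6)
    (h6 : Q 0 0 = 6) : ∃ g ∈ FrickeGroup 6, Q = formComp (formMat 6 (-4) 1) g := by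
  obtain ⟨a, b, c, rfl, -, hdisc, -⟩ := hQ
  have ha : (a : ℝ) = 6 := h6
  obtain rfl : a = 6 := mod_cast ha
  obtain ⟨r, q, rfl, hr₁, hr₂⟩ : ∃ r q : ℤ, b = r + 12 * q ∧ -6 ≤ r ∧ r < 6 :=
    ⟨(b + 6) % 12 - 6, (b + 6) / 12, by omega, by omega, by omega⟩
  have hr : r ^ 2 + 8 = 24 * (c - r * q - 6 * q ^ 2) := by linear_combination hdisc
  have hr4 : r = -4 ∨ r = 4 := by interval_cases r <;> omega
  obtain rfl : c = 6 * q ^ 2 + r * q + 1 := by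
    rcases hr4 with rfl | rfl <;> linarith
  have hshift := closure_frickeGenerators_le (shift_mem q)
  have hinv := closure_frickeGenerators_le frickeInvolution_mem
  rw [← formComp_formMat_six_shift]
  rcases hr4 with rfl | rfl
  · exact ⟨shift q, hshift, rfl⟩
  · refine ⟨frickeInvolution * shift q, mul_mem hinv hshift, ?_⟩
    rw [formComp_mul, formComp_formMat_six_frickeInvolution, neg_neg]

theorem exists_eq_formComp_of_mem_QdN {Q : Matrix (Fin 2) (Fin 2) ℝ} (hQ : Q ∈ QdN 8 6) :
    ∃ g ∈ FrickeGroup 6, Q = formComp (formMat 6 (-4) 1) g := by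
  obtain ⟨g, hg, h6⟩ := exists_formComp_apply_zero_zero_eq_six hQ
  obtain ⟨h, hh, hQg⟩ :=
    eq_formComp_of_apply_zero_zero_eq_six (formComp_mem_QdN (by norm_num) hg hQ) h6
  exact ⟨h * g⁻¹, mul_mem hh (inv_mem hg), by rw [formComp_mul, ← hQg, formComp_formComp_inv]⟩

theorem cmPointC_formMat_six_neg_four_one :
    cmPointC (formMat 6 (-4) 1) = (2 + I * √2) / 6 := by
  rw [cmPointC, det_of_mem_QdN formMat_mem_QdN_eight_six]
  simp only [formMat, of_apply, cons_val_zero, cons_val_one]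
  norm_num

theorem jnStar_six_cmPointC : jnStar 6 (cmPointC (formMat 6 (-4) 1)) = -10 := by
  have hQ := formMat_mem_QdN_eight_six
  have h0 := apply_zero_zero_pos_of_mem_QdN hQ
  have hdet := det_pos_of_mem_QdN (by norm_num) hQ
  refine jnStar_six_of_quadratic (im_cmPointC_pos h0 hdet) ?_
  convert cmPointC_isRoot (isSymm_of_mem_QdN hQ) h0 hdet using 1
  simp only [formMat, of_apply, cons_val', cons_val_zero, cons_val_one, cons_val_fin_one]
  push_cast
  ring

/-- The stabilizer in `Γ` of the form with Gram matrix `M`. -/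
def formStabilizer (Γ : Subgroup SL2R) (M : Matrix (Fin 2) (Fin 2) ℝ) : Subgroup SL2R where
  carrier := {g | g ∈ Γ ∧ formComp M g = M}
  one_mem' := ⟨one_mem Γ, formComp_one M⟩
  mul_mem' := fun ⟨hg, hgM⟩ ⟨hh, hhM⟩ => ⟨mul_mem hg hh, by rw [formComp_mul, hgM, hhM]⟩
  inv_mem' := fun ⟨hg, hgM⟩ => ⟨inv_mem hg, (formComp_eq_iff.1 hgM).symm⟩

theorem stabOrder_eq_card_formStabilizer (Γ : Subgroup SL2R) (M : Matrix (Fin 2) (Fin 2) ℝ) :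
    stabOrder Γ M = Nat.card (formStabilizer Γ M) / 2 :=
  rfl

/-- The Atkin–Lehner involution `W₂` of level `6` fixing the CM point of `[6, -4, 1]`. -/
noncomputable def atkinLehnerTwo : SL2R := atkinLehner 2 3 1 (-1) 1 (-1) two_ne_zero (by simp)

theorem atkinLehnerTwo_sq : atkinLehnerTwo ^ 2 = -1 := by
  rw [sq, one_eq_atkinLehner 6, neg_atkinLehner]
  exact atkinLehner_mul (d := 2) (e₁ := 1) (e₂ := 1) (k := 3)

theorem orderOf_atkinLehnerTwo : orderOf atkinLehnerTwo = 4 := by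
  refine orderOf_eq_prime_pow (p := 2) (n := 1) ?_ ?_
  · rw [pow_one, atkinLehnerTwo_sq]
    intro h
    have := congrArg (fun g : SL2R => g.1 0 0) h
    norm_num at this
  · rw [show 2 ^ (1 + 1) = 2 * 2 by rfl, pow_mul, atkinLehnerTwo_sq, neg_one_sq]

theorem parameters_of_stabilizes {e f : ℕ} (hef : e * f = 6) {x y w : ℤ}
    (h : (e : ℤ) * x * w + f * y ^ 2 = 1) (hxw : e * (x - w) = -4 * y) :
    (x = 1 ∨ x = -1) ∧ (e = 1 ∧ y = 0 ∧ w = x ∨ e = 2 ∧ y = -x ∧ w = -x) := by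
  obtain ⟨t, rfl⟩ : ∃ t, w = t - x := ⟨w + x, by ring⟩
  have hefZ : (e : ℤ) * f = 6 := mod_cast hef
  have hsum : (e * t) ^ 2 + 8 * y ^ 2 = 4 * e := by
    linear_combination (e * (2 * x - t) - 4 * y) * hxw + 4 * e * h - 4 * y ^ 2 * hefZ
  have he : e ∈ Nat.divisors 6 := Nat.mem_divisors.2 ⟨⟨f, hef.symm⟩, by norm_num⟩
  have he' : e = 1 ∨ e = 2 ∨ e = 3 ∨ e = 6 := by
    simpa [show Nat.divisors 6 = {1, 2, 3, 6} by decide] using he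
  have hy : -1 ≤ y ∧ y ≤ 1 := by
    rcases he' with rfl | rfl | rfl | rfl <;> constructor <;> push_cast at hsum <;>
      nlinarith
  have ht : -2 ≤ t ∧ t ≤ 2 := by
    rcases he' with rfl | rfl | rfl | rfl <;> constructor <;> push_cast at hsum <;>
      nlinarith
  obtain ⟨hy₁, hy₂⟩ := hy
  obtain ⟨ht₁, ht₂⟩ := ht
  constructor <;> rcases he' with rfl | rfl | rfl | rfl <;> push_cast at hsum hxw <;>
    interval_cases y <;> interval_cases t <;> omega

theorem formComp_atkinLehner_eq_self {e f : ℕ} (hef : e * f = 6) {x y z w : ℤ} {he : e ≠ 0}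
    {h : (e : ℤ) * x * w - f * y * z = 1}
    (hg : formComp (formMat 6 (-4) 1) (atkinLehner e f x y z w he h) = formMat 6 (-4) 1) :
    z = -y ∧ e * (x - w) = -4 * y := by
  have hef' : (e : ℝ) * f = 6 := mod_cast hef
  have hs : √(e : ℝ) ≠ 0 := by positivity
  have hsq : √(e : ℝ) ^ 2 = e := Real.sq_sqrt (Nat.cast_nonneg e)
  have hM : (formMat 6 (-4) 1).IsSymm := isSymm_of_mem_QdN formMat_mem_QdN_eight_six
  obtain ⟨hyz, hxw⟩ := (formComp_eq_self_iff hM (by norm_num [formMat])).1 hg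
  simp only [formMat, atkinLehner, of_apply, cons_val', cons_val_zero, cons_val_one,
    cons_val_fin_one] at hyz hxw
  push_cast at hyz hxw
  field_simp at hyz
  rw [hsq] at hyz
  have hz : (z : ℝ) = -y := by linear_combination (1 / 6) * hyz - z / 6 * hef'
  have hxw' : (6 : ℝ) * (x - w) = 4 * z * f :=
    mul_right_cancel₀ hs (by linear_combination hxw)
  have hdiff : (e : ℝ) * (x - w) = -4 * y := by
    linear_combination (e / 6 : ℝ) * hxw' + 4 * z / 6 * hef' + 4 * hz
  exact ⟨mod_cast hz, mod_cast hdiff⟩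

theorem atkinLehnerTwo_mem_formStabilizer :
    atkinLehnerTwo ∈ formStabilizer (FrickeGroup 6) (formMat 6 (-4) 1) :=
  ⟨atkinLehner_mem_frickeGroup (e := 2) (f := 3),
    (formComp_formMat_atkinLehner (e := 2) (f := 3) 1 (-4) 1).trans (by norm_num)⟩

theorem formStabilizer_eq_zpowers :
    formStabilizer (FrickeGroup 6) (formMat 6 (-4) 1) = Subgroup.zpowers atkinLehnerTwo := by
  refine le_antisymm ?_ (Subgroup.zpowers_le.2 atkinLehnerTwo_mem_formStabilizer)
  rintro g ⟨hgF, hg⟩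
  have hneg : (-1 : SL2R) ∈ Subgroup.zpowers atkinLehnerTwo :=
    atkinLehnerTwo_sq ▸ pow_mem (Subgroup.mem_zpowers atkinLehnerTwo) 2
  obtain ⟨e, f, x, y, z, w, he, h, hef, rfl⟩ := mem_frickeGroup_iff.1 hgF
  obtain ⟨rfl, hxw⟩ := formComp_atkinLehner_eq_self hef hg
  obtain ⟨hx, ⟨rfl, rfl, rfl⟩ | ⟨rfl, rfl, rfl⟩⟩ :=
    parameters_of_stabilizes hef (by linear_combination h) hxw
  · obtain rfl : f = 6 := by omega
    rcases hx with rfl | rfl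
    · exact one_eq_atkinLehner 6 ▸ one_mem _
    · rwa [one_eq_atkinLehner 6, neg_atkinLehner] at hneg
  · obtain rfl : f = 3 := by omega
    rcases hx with rfl | rfl
    · exact Subgroup.mem_zpowers atkinLehnerTwo
    · have hmul := mul_mem hneg (Subgroup.mem_zpowers atkinLehnerTwo)
      rwa [neg_one_mul, atkinLehnerTwo, neg_atkinLehner] at hmul

theorem stabOrder_frickeGroup_six : stabOrder (FrickeGroup 6) (formMat 6 (-4) 1) = 2 := by
  rw [stabOrder_eq_card_formStabilizer, formStabilizer_eq_zpowers, Nat.card_zpowers,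
    orderOf_atkinLehnerTwo]

theorem t2Star_six_eight (P : Polynomial ℂ) : t2Star 6 P 8 = P.eval (-10) / 2 := by
  have hQ := formMat_mem_QdN_eight_six
  rw [t2Star, if_pos (by norm_num), classTrace_eq_of_forall_eq_formComp hQ
    (isSymm_of_mem_QdN hQ) (apply_zero_zero_pos_of_mem_QdN hQ)
    (det_pos_of_mem_QdN (by norm_num) hQ) (fun _ => exists_eq_formComp_of_mem_QdN)
    fun g hg z hz => by rw [jnStar_six_moebius hg hz], jnStar_six_cmPointC,
    stabOrder_frickeGroup_six, Nat.cast_two]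

end DiscriminantEight

/-- **CM value at level 6.** `j₆*((2 + i√2)/6) = -10`; moreover `(2 + i√2)/6` is the CM point
of `Q = [6,-4,1]` of discriminant `-8`, whose class `𝒬_{8,6}/Γ₀*(6)` is a single orbit with
`|Γ̄₀*(6)_Q| = 2`, and with `φ₂(j₆*) = (j₆*)² - 158` one gets
`t₂^{(6*)}(8) = ((-10)² - 158)/2 = -29`. -/
theorem cm_value_level_six :
    jnStar 6 ((2 + Complex.I * Real.sqrt 2) / 6) = -10 ∧
    cmPointC (formMat 6 (-4) 1) = (2 + Complex.I * Real.sqrt 2) / 6 ∧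
    formMat 6 (-4) 1 ∈ QdN 8 6 ∧
    (∀ Q ∈ QdN 8 6, ∃ g ∈ FrickeGroup 6, Q = (g.1)ᵀ * formMat 6 (-4) 1 * g.1) ∧
    stabOrder (FrickeGroup 6) (formMat 6 (-4) 1) = 2 ∧
    t2Star 6 (Polynomial.X ^ 2 - Polynomial.C 158) 8 = -29 := by
  refine ⟨?_, cmPointC_formMat_six_neg_four_one, formMat_mem_QdN_eight_six,
    fun _ => exists_eq_formComp_of_mem_QdN, stabOrder_frickeGroup_six, ?_⟩
  · rw [← cmPointC_formMat_six_neg_four_one, jnStar_six_cmPointC]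
  · rw [t2Star_six_eight]
    norm_num
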